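/- For every t > 0, the surviving mass Q(t) = ∫_{−∞}^{L} p(x, t) dx of the absorbing-boundary solution satisfies 0 < Q(t) < 1 (the density is not normalized due to absorption at the wall). -/

import Mathlib

/-!
Completing the square shows that the image term equals `e^{(L - x₀)(x - L)/(Dt)} U(x, t, x₀)`
(`image_eq`): the drift-dependent parts of the exponent cancel. Hence the image term is strictly
smaller than `U(x, t, x₀)` for `x < L`, so `p > 0` there and `0 < Q(t)`. Since `U(·, t, x₀)` is the
density of the Gaussian law with mean `x₀ + νt` and variance `2Dt`, its integral over `(-∞, L]` is
at most `1`; the image term removes a strictly positive mass, so `Q(t) < 1`.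
-/

open Real MeasureTheory

/-- The free advection–diffusion kernel `U(x, t, η)`. -/
noncomputable def U (D ν : ℝ) (x t η : ℝ) : ℝ :=
  (1 / Real.sqrt (4 * Real.pi * D * t)) * Real.exp (-(x - η - ν * t) ^ 2 / (4 * D * t))

/-- The absorbing-boundary solution `p(x, t) = U(x, t, x₀) − e^{(ν/D)(L − x₀)} U(x, t, 2L − x₀)`. -/
noncomputable def pAbs (D ν L x₀ : ℝ) (x t : ℝ) : ℝ :=
  U D ν x t x₀ - Real.exp ((ν / D) * (L - x₀)) * U D ν x t (2 * L - x₀)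

/-- The variance `2Dt` is passed as an element of `ℝ≥0` through `Real.toNNReal`. -/
lemma U_eq_gaussianPDFReal (D ν t η : ℝ) (hD : 0 < D) (ht : 0 < t) :
    (fun x => U D ν x t η) =
      ProbabilityTheory.gaussianPDFReal (η + ν * t) (2 * D * t).toNNReal := by
  funext x
  have h : (0 : ℝ) ≤ 2 * D * t := by positivity
  rw [U, ProbabilityTheory.gaussianPDFReal, Real.coe_toNNReal _ h, one_div]
  ring_nf

lemma U_pos (D ν x t η : ℝ) (hD : 0 < D) (ht : 0 < t) : 0 < U D ν x t η := by
  have := Real.pi_pos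
  unfold U
  positivity

lemma integrable_U (D ν t η : ℝ) (hD : 0 < D) (ht : 0 < t) :
    Integrable (fun x => U D ν x t η) := by
  rw [U_eq_gaussianPDFReal D ν t η hD ht]
  exact ProbabilityTheory.integrable_gaussianPDFReal _ _

lemma integral_U (D ν t η : ℝ) (hD : 0 < D) (ht : 0 < t) : ∫ x, U D ν x t η = 1 := by
  rw [U_eq_gaussianPDFReal D ν t η hD ht]
  refine ProbabilityTheory.integral_gaussianPDFReal_eq_one _ ?_
  have : 0 < (2 * D * t).toNNReal := Real.toNNReal_pos.2 (by positivity)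
  exact this.ne'

/-- The image term is the direct term damped by a factor that is `1` at the wall `x = L`. -/
lemma image_eq (D ν L x₀ x t : ℝ) (hD : 0 < D) (ht : 0 < t) :
    Real.exp ((ν / D) * (L - x₀)) * U D ν x t (2 * L - x₀) =
      Real.exp ((L - x₀) * (x - L) / (D * t)) * U D ν x t x₀ := by
  unfold U
  rw [mul_left_comm, mul_left_comm (Real.exp ((L - x₀) * (x - L) / (D * t))),
    ← Real.exp_add, ← Real.exp_add]
  congr 2
  field_simp
  ring

lemma pAbs_pos (D ν L x₀ x t : ℝ) (hD : 0 < D) (hx₀ : x₀ < L) (ht : 0 < t) (hx : x < L) :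
    0 < pAbs D ν L x₀ x t := by
  have hneg : (L - x₀) * (x - L) / (D * t) < 0 :=
    div_neg_of_neg_of_pos (mul_neg_of_pos_of_neg (by linarith) (by linarith)) (by positivity)
  have h1 := Real.exp_lt_one_iff.2 hneg
  have hU := U_pos D ν x t x₀ hD ht
  rw [pAbs, image_eq D ν L x₀ x t hD ht]
  nlinarith

lemma setIntegral_Iic_pos {f : ℝ → ℝ} {L : ℝ} (hf : Integrable f) (h : ∀ x < L, 0 < f x) :
    0 < ∫ x in Set.Iic L, f x := by
  rw [integral_Iic_eq_integral_Iio]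
  rw [setIntegral_pos_iff_support_of_nonneg_ae
    (ae_restrict_of_forall_mem measurableSet_Iio fun x hx => (h x hx).le) hf.integrableOn]
  have : Function.support f ∩ Set.Iio L = Set.Iio L :=
    Set.inter_eq_right.2 fun x hx => (h x hx).ne'
  rw [this, Real.volume_Iio]
  exact ENNReal.zero_lt_top

/-- For every `t > 0`, the surviving mass `Q(t) = ∫_{−∞}^{L} p(x, t) dx` satisfies
`0 < Q(t) < 1`: the density is not normalized due to absorption at the wall. -/
theorem pAbs_mass_lt_one (D ν L x₀ : ℝ) (hD : 0 < D) (hx₀ : x₀ < L) :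
    ∀ t : ℝ, 0 < t →
      0 < ∫ x in Set.Iic L, pAbs D ν L x₀ x t ∧
        (∫ x in Set.Iic L, pAbs D ν L x₀ x t) < 1 := by
  intro t ht
  have hU := integrable_U D ν t x₀ hD ht
  have hV := (integrable_U D ν t (2 * L - x₀) hD ht).const_mul (Real.exp ((ν / D) * (L - x₀)))
  refine ⟨setIntegral_Iic_pos (hU.sub hV) fun x hx => pAbs_pos D ν L x₀ x t hD hx₀ ht hx, ?_⟩
  have hle : ∫ x in Set.Iic L, U D ν x t x₀ ≤ 1 := by
    rw [← integral_U D ν t x₀ hD ht]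
    exact setIntegral_le_integral hU (ae_of_all _ fun x => (U_pos D ν x t x₀ hD ht).le)
  have hpos := setIntegral_Iic_pos (L := L) hV fun x _ =>
    mul_pos (Real.exp_pos _) (U_pos D ν x t (2 * L - x₀) hD ht)
  have hsub : ∫ x in Set.Iic L, pAbs D ν L x₀ x t = _ :=
    integral_sub hU.integrableOn hV.integrableOn
  rw [hsub]
  linarith
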